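/- Let H²_β be a weighted Hardy space of polynomial growth, and let h₁, h₂ be analytic on an open neighborhood of the closed unit disk, with {M_{h₁}}' = {M_{h₂}}' = {M_z}' as subalgebras of bounded operators on H²_β. Then M_{h₁} is similar to M_{h₂} on H²_β if and only if there exists an analytic automorphism φ ∈ Aut(𝔻) such that h₂ = h₁ ∘ φ. -/

import Mathlib

noncomputable section

open Complex Filter Topology

/-- The sequence-space (ℓ²) model of a weighted Hardy space `H²_β`.
An element `a : H2` represents the analytic function whose `k`-th Taylor
coefficient is `a k / β k` (so that `‖a‖` is exactly the `H²_β`-norm). -/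
abbrev H2 : Type := lp (fun _ : ℕ => ℂ) 2

/-- The direct sum (ℓ²-sense) of `m` copies of `H2`. -/
abbrev Hm (m : ℕ) : Type := PiLp 2 (fun _ : Fin m => H2)

/-- The open unit disk 𝔻 ⊆ ℂ. -/
def unitDisk : Set ℂ := Metric.ball 0 1

/-- `β_0 = 1` and `β_k = ∏_{j=1}^k w_j`. -/
def betaSeq (w : ℕ → ℝ) (k : ℕ) : ℝ := ∏ j ∈ Finset.Icc 1 k, w j

/-- The analytic function on 𝔻 represented by the vector `a` in the model of `H²_β`:
`f(z) = ∑_k (a k / β k) z^k`. -/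
def repFun (β : ℕ → ℝ) (a : H2) (z : ℂ) : ℂ := ∑' k, (a k / (β k : ℂ)) * z ^ k

/-- `T` is (the ℓ²-model of) the multiplication operator `M_g` on `H²_β`.
Existence of such a `T` says precisely that `M_g` is bounded on `H²_β`. -/
def RepMul (β : ℕ → ℝ) (g : ℂ → ℂ) (T : H2 →L[ℂ] H2) : Prop :=
  ∀ a : H2, ∀ z ∈ unitDisk, repFun β (T a) z = g z * repFun β a z

/-- `T` is (the ℓ²-model of) the composition operator `C_ψ` on `H²_β`.
Existence of such a `T` says precisely that `C_ψ` is bounded on `H²_β`. -/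
def RepComp (β : ℕ → ℝ) (ψ : ℂ → ℂ) (T : H2 →L[ℂ] H2) : Prop :=
  ∀ a : H2, ∀ z ∈ unitDisk, repFun β (T a) z = repFun β a (ψ z)

/-- The Möbius factor `φ_{z₀}(z) = (z₀ - z)/(1 - conj z₀ · z)`. -/
def mobius (z₀ z : ℂ) : ℂ := (z₀ - z) / (1 - (starRingEnd ℂ) z₀ * z)

/-- `φ` belongs to `Aut(𝔻)`, i.e. `φ(z) = e^{iθ}(z₀ - z)/(1 - conj z₀ · z)`. -/
def IsDiskAut (φ : ℂ → ℂ) : Prop :=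
  ∃ (θ : ℝ) (z₀ : ℂ), z₀ ∈ unitDisk ∧
    ∀ z, φ z = Complex.exp (θ * Complex.I) * mobius z₀ z

/-- `B` is a finite Blaschke product of order `m`. -/
def IsBlaschke (m : ℕ) (B : ℂ → ℂ) : Prop :=
  ∃ (θ : ℝ) (zs : Fin m → ℂ), (∀ j, zs j ∈ unitDisk) ∧
    ∀ z, B z = Complex.exp (θ * Complex.I) * ∏ j, mobius (zs j) z

/-- `w` is a positive weight sequence tending to `1` such that the weighted Hardy
space `H²_β` is of polynomial growth: `sup_k (k+1)|w_k - 1| < ∞`. -/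
def PolyGrowth (w : ℕ → ℝ) : Prop :=
  (∀ k, 1 ≤ k → 0 < w k) ∧ Tendsto w atTop (nhds 1) ∧
    ∃ M : ℝ, ∀ k : ℕ, 1 ≤ k → ((k : ℝ) + 1) * |w k - 1| ≤ M

/-- `f` is analytic on an open neighbourhood of the closed unit disk. -/
def AnalyticOnClosedDisk (f : ℂ → ℂ) : Prop :=
  ∃ U : Set ℂ, IsOpen U ∧ Metric.closedBall (0:ℂ) 1 ⊆ U ∧ AnalyticOnNhd ℂ f U

/-- The commutant of a bounded operator on `H2`. -/
def commutant (A : H2 →L[ℂ] H2) : Set (H2 →L[ℂ] H2) := {T | T * A = A * T}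


namespace S17

lemma beta_pos {w : ℕ → ℝ} (hw : PolyGrowth w) (k : ℕ) : 0 < betaSeq w k :=
  Finset.prod_pos fun j hj => hw.1 j (Finset.mem_Icc.mp hj).1

lemma beta_zero (w : ℕ → ℝ) : betaSeq w 0 = 1 := by simp [betaSeq]

lemma beta_succ (w : ℕ → ℝ) (k : ℕ) : betaSeq w (k+1) = betaSeq w k * w (k+1) := by
  unfold betaSeq
  rw [Finset.prod_Icc_succ_top (by omega)]

lemma summable_sq {w : ℕ → ℝ} (hw : PolyGrowth w) {r : ℝ} (h0 : 0 < r) (h1 : r < 1) :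
    Summable fun k : ℕ => ((k:ℝ) + 1) * (r ^ k / betaSeq w k) ^ 2 := by
  have hw1 : Tendsto (fun n : ℕ => w (n+1)) atTop (𝓝 1) := (tendsto_add_atTop_iff_nat 1).2 hw.2.1
  have hn : Tendsto (fun n : ℕ => 1 + 1 / ((n:ℝ) + 1)) atTop (𝓝 (1 + 0)) :=
    tendsto_one_div_add_atTop_nhds_zero_nat.const_add 1
  refine summable_of_ratio_test_tendsto_lt_one (l := (1 + 0) * (r / 1) ^ 2) ?_ ?_ ?_
  · simp only [add_zero, one_mul, div_one]; nlinarith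
  · refine Eventually.of_forall fun k => ?_
    have := beta_pos hw k
    positivity
  · refine (hn.mul ((Tendsto.div (tendsto_const_nhds (x := r) (f := atTop)) hw1 one_ne_zero).pow 2)).congr fun n => ?_
    have a := beta_pos hw n
    have b := hw.1 (n+1) (by omega)
    rw [beta_succ, Real.norm_of_nonneg (by positivity), Real.norm_of_nonneg (by positivity)]
    simp only [Pi.div_apply]
    push_cast
    field_simp
    ring

lemma summable_beta {w : ℕ → ℝ} (hw : PolyGrowth w) {r : ℝ} (h0 : 0 < r) (h1 : r < 1) :
    Summable fun k : ℕ => betaSeq w k * r ^ k := by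
  have hw1 : Tendsto (fun n : ℕ => w (n+1)) atTop (𝓝 1) := (tendsto_add_atTop_iff_nat 1).2 hw.2.1
  refine summable_of_ratio_test_tendsto_lt_one (l := 1 * r) (by simpa) ?_ ?_
  · refine Eventually.of_forall fun k => ?_
    have := beta_pos hw k
    positivity
  · refine (hw1.mul_const r).congr fun n => ?_
    have a := beta_pos hw n
    have b := hw.1 (n+1) (by omega)
    rw [beta_succ, Real.norm_of_nonneg (by positivity), Real.norm_of_nonneg (by positivity)]
    field_simp
    ring

lemma memV {w : ℕ → ℝ} (hw : PolyGrowth w) {z : ℂ} (hz : ‖z‖ < 1) :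
    Memℓp (E := fun _ : ℕ => ℂ) (fun k : ℕ => z ^ k / (betaSeq w k : ℂ)) 2 := by
  apply memℓp_gen
  have h1 : (1 + ‖z‖) / 2 < 1 := by linarith
  have h0 : 0 < (1 + ‖z‖) / 2 := by positivity
  refine Summable.of_nonneg_of_le (fun k => by positivity) (fun k => ?_) (summable_sq hw h0 h1)
  have hb := beta_pos hw k
  simp only [ENNReal.toReal_ofNat, Real.rpow_two, norm_div, norm_pow, Complex.norm_real,
    Real.norm_of_nonneg hb.le]
  have h2 : ‖z‖ ^ k ≤ ((1 + ‖z‖) / 2) ^ k := by gcongr; linarith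
  have h3 : (‖z‖ ^ k / betaSeq w k) ^ 2 ≤ (((1 + ‖z‖) / 2) ^ k / betaSeq w k) ^ 2 := by gcongr
  nlinarith [sq_nonneg (((1 + ‖z‖) / 2) ^ k / betaSeq w k), Nat.cast_nonneg (α := ℝ) k]

open Classical in
/-- power vectors -/
def V (w : ℕ → ℝ) (z : ℂ) : H2 :=
  if h : Memℓp (E := fun _ : ℕ => ℂ) (fun k : ℕ => z ^ k / (betaSeq w k : ℂ)) 2 then ⟨_, h⟩ else 0

lemma V_apply {w : ℕ → ℝ} (hw : PolyGrowth w) {z : ℂ} (hz : ‖z‖ < 1) (k : ℕ) :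
    V w z k = z ^ k / (betaSeq w k : ℂ) := by
  unfold V
  rw [dif_pos (memV hw hz)]

lemma mem_disk {z : ℂ} : z ∈ unitDisk ↔ ‖z‖ < 1 := by simp [unitDisk]

lemma hasSum_rep {w : ℕ → ℝ} (hw : PolyGrowth w) {z : ℂ} (hz : ‖z‖ < 1) (a : H2) :
    HasSum (fun k => (a k / (betaSeq w k : ℂ)) * z ^ k)
      (inner ℂ (V w ((starRingEnd ℂ) z)) a) := by
  have h := lp.hasSum_inner (𝕜 := ℂ) (V w ((starRingEnd ℂ) z)) a
  convert! h using 2 with k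
  rw [V_apply hw (by simpa using hz), RCLike.inner_apply]
  simp
  ring

lemma rep_eq {w : ℕ → ℝ} (hw : PolyGrowth w) {z : ℂ} (hz : ‖z‖ < 1) (a : H2) :
    repFun (betaSeq w) a z = inner ℂ (V w ((starRingEnd ℂ) z)) a :=
  (hasSum_rep hw hz a).tsum_eq

lemma hasFPS {w : ℕ → ℝ} (hw : PolyGrowth w) (a : H2) :
    HasFPowerSeriesOnBall (repFun (betaSeq w) a)
      (FormalMultilinearSeries.ofScalars ℂ fun k => (a k / (betaSeq w k : ℂ))) 0 1 := by
  refine ⟨?_, one_pos, fun {y} hy => ?_⟩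
  · refine ENNReal.le_of_forall_nnreal_lt fun r hr => ?_
    apply FormalMultilinearSeries.le_radius_of_summable
    have hr' : (r:ℝ) < 1 := by exact_mod_cast hr
    have := (hasSum_rep hw (z := (r:ℝ)) (by simpa using hr') a).summable.norm
    simpa [FormalMultilinearSeries.ofScalars_norm] using this
  · have hy' : ‖y‖ < 1 := by
      rwa [Metric.mem_eball, edist_zero_right, ← ofReal_norm, ENNReal.ofReal_lt_one] at hy
    have := hasSum_rep hw hy' a
    rw [← rep_eq hw hy'] at this
    simpa [FormalMultilinearSeries.ofScalars_apply_eq, mul_comm] using this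

lemma rep_diff {w : ℕ → ℝ} (hw : PolyGrowth w) (a : H2) :
    DifferentiableOn ℂ (repFun (betaSeq w) a) unitDisk := by
  have := (hasFPS hw a).differentiableOn
  refine this.mono fun z hz => ?_
  rw [Metric.mem_eball, edist_zero_right, ← ofReal_norm, ENNReal.ofReal_lt_one]
  exact mem_disk.1 hz

lemma rep_inj {w : ℕ → ℝ} (hw : PolyGrowth w) {a b : H2}
    (h : ∀ z ∈ unitDisk, repFun (betaSeq w) a z = repFun (betaSeq w) b z) : a = b := by
  have ha := (hasFPS hw a).hasFPowerSeriesAt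
  have hb := (hasFPS hw b).hasFPowerSeriesAt
  have he : repFun (betaSeq w) b =ᶠ[𝓝 0] repFun (betaSeq w) a := by
    filter_upwards [Metric.ball_mem_nhds (0:ℂ) one_pos] with z hz
    exact (h z hz).symm
  have := FormalMultilinearSeries.ofScalars_series_injective ℂ ℂ
    (ha.eq_formalMultilinearSeries (hb.congr he))
  ext k
  have hk := congrFun this k
  have hb : (betaSeq w k : ℂ) ≠ 0 := by exact_mod_cast (beta_pos hw k).ne'
  exact (div_left_inj' hb).1 hk

/-- monomials -/
def Z (w : ℕ → ℝ) (k : ℕ) : H2 := (betaSeq w k : ℂ) • lp.single 2 k (1:ℂ)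

lemma rep_Z {w : ℕ → ℝ} (hw : PolyGrowth w) (k : ℕ) {z : ℂ} (hz : ‖z‖ < 1) :
    repFun (betaSeq w) (Z w k) z = z ^ k := by
  have hb : (betaSeq w k : ℂ) ≠ 0 := by exact_mod_cast (beta_pos hw k).ne'
  rw [rep_eq hw hz, Z, inner_smul_right, lp.inner_single_right, V_apply hw (by simpa using hz),
    RCLike.inner_apply]
  simp
  field_simp

lemma Tz_Z {w : ℕ → ℝ} (hw : PolyGrowth w) {Tz : H2 →L[ℂ] H2}
    (hTz : RepMul (betaSeq w) (fun z => z) Tz) (k : ℕ) : Tz (Z w k) = Z w (k+1) := by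
  refine rep_inj hw fun z hz => ?_
  rw [hTz _ z hz, rep_Z hw _ (mem_disk.1 hz), rep_Z hw _ (mem_disk.1 hz)]
  ring

lemma func_Z {w : ℕ → ℝ} (hw : PolyGrowth w) {Tz : H2 →L[ℂ] H2}
    (hTz : RepMul (betaSeq w) (fun z => z) Tz) (L : H2 →L[ℂ] ℂ) (μ : ℂ)
    (hL : ∀ a, L (Tz a) = μ * L a) (k : ℕ) : L (Z w k) = μ ^ k * L (Z w 0) := by
  induction k with
  | zero => simp
  | succ k ih => rw [← Tz_Z hw hTz, hL, ih]; ring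

lemma func_sum {w : ℕ → ℝ} (hw : PolyGrowth w) {Tz : H2 →L[ℂ] H2}
    (hTz : RepMul (betaSeq w) (fun z => z) Tz) (L : H2 →L[ℂ] ℂ) (μ : ℂ)
    (hL : ∀ a, L (Tz a) = μ * L a) (a : H2) :
    HasSum (fun k => (a k / (betaSeq w k : ℂ)) * μ ^ k * L (Z w 0)) (L a) := by
  have h := (lp.hasSum_single (E := fun _ : ℕ => ℂ) (p := 2) (by simp) a).mapL L
  convert! h using 2 with k
  have hb : (betaSeq w k : ℂ) ≠ 0 := by exact_mod_cast (beta_pos hw k).ne'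
  have : (lp.single 2 k (a k) : H2) = (a k / (betaSeq w k : ℂ)) • Z w k := by
    rw [Z, smul_smul, ← lp.single_smul]
    congr 1
    simp
    field_simp
  rw [this, map_smul, func_Z hw hTz L μ hL k]
  simp
  ring

lemma func_eq {w : ℕ → ℝ} (hw : PolyGrowth w) {Tz : H2 →L[ℂ] H2}
    (hTz : RepMul (betaSeq w) (fun z => z) Tz) (L : H2 →L[ℂ] ℂ) (μ : ℂ) (hμ : ‖μ‖ < 1)
    (hL : ∀ a, L (Tz a) = μ * L a) (a : H2) :
    L a = L (Z w 0) * repFun (betaSeq w) a μ := by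
  have h1 := func_sum hw hTz L μ hL a
  have h2 := (hasSum_rep hw hμ a).mul_right (L (Z w 0))
  rw [h1.unique h2, rep_eq hw hμ, mul_comm]

lemma func_le {w : ℕ → ℝ} (hw : PolyGrowth w) {Tz : H2 →L[ℂ] H2}
    (hTz : RepMul (betaSeq w) (fun z => z) Tz) (L : H2 →L[ℂ] ℂ) (μ : ℂ)
    (hL : ∀ a, L (Tz a) = μ * L a) (h0 : L ≠ 0) : ‖μ‖ ≤ 1 := by
  by_contra! hμ
  have hZ : L (Z w 0) = 0 := by
    have hpos : 0 < ‖μ‖ := by linarith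
    have hs := (summable_beta hw (inv_pos.2 hpos) (inv_lt_one_of_one_lt₀ hμ)).tendsto_atTop_zero
    have h2 : ∀ k : ℕ, ‖L (Z w 0)‖ ≤ ‖L‖ * (betaSeq w k * ‖μ‖⁻¹ ^ k) := by
      intro k
      have h := L.le_opNorm (Z w k)
      have hn : ‖Z w k‖ = betaSeq w k := by
        rw [Z, norm_smul, lp.norm_single (by simp)]
        simp [(beta_pos hw k).le]
      rw [func_Z hw hTz L μ hL, norm_mul, norm_pow, hn] at h
      rw [inv_pow, ← mul_assoc, ← div_eq_mul_inv, le_div_iff₀ (by positivity)]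
      linarith
    have h3 := ge_of_tendsto' (hs.const_mul ‖L‖) h2
    simpa using h3
  apply h0
  ext a
  have := func_sum hw hTz L μ hL a
  simp only [hZ, mul_zero] at this
  exact this.unique hasSum_zero

/-- evaluation -/
def ev (w : ℕ → ℝ) (z : ℂ) : H2 →L[ℂ] ℂ := innerSL ℂ (V w ((starRingEnd ℂ) z))

lemma ev_apply {w : ℕ → ℝ} (hw : PolyGrowth w) {z : ℂ} (hz : ‖z‖ < 1) (a : H2) :
    ev w z a = repFun (betaSeq w) a z := by
  rw [rep_eq hw hz]; rfl


lemma comm_mul {w : ℕ → ℝ} (hw : PolyGrowth w) {Tz : H2 →L[ℂ] H2}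
    (hTz : RepMul (betaSeq w) (fun z => z) Tz) (S : H2 →L[ℂ] H2)
    (hS : ∀ a, S (Tz a) = Tz (S a)) :
    RepMul (betaSeq w) (repFun (betaSeq w) (S (Z w 0))) S := by
  intro a z hz
  have hz' := mem_disk.1 hz
  have := func_eq hw hTz ((ev w z).comp S) z hz' (fun a => by
    simp only [ContinuousLinearMap.comp_apply, hS, ev_apply hw hz']
    exact hTz _ z hz) a
  simpa only [ContinuousLinearMap.comp_apply, ev_apply hw hz'] using this

lemma weighted_comp {w : ℕ → ℝ} (hw : PolyGrowth w) {Tz : H2 →L[ℂ] H2}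
    (hTz : RepMul (betaSeq w) (fun z => z) Tz) (X : H2 ≃L[ℂ] H2)
    (hX : ∀ a, X (Tz (X.symm (Tz a))) = Tz (X (Tz (X.symm a)))) :
    ∃ φ : ℂ → ℂ, DifferentiableOn ℂ φ unitDisk ∧ Set.MapsTo φ unitDisk unitDisk ∧
      ∀ a, ∀ z ∈ unitDisk, repFun (betaSeq w) (X a) z =
        repFun (betaSeq w) (X (Z w 0)) z * repFun (betaSeq w) a (φ z) := by
  let S : H2 →L[ℂ] H2 := (X : H2 →L[ℂ] H2).comp (Tz.comp (X.symm : H2 →L[ℂ] H2))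
  have hS : ∀ a, S a = X (Tz (X.symm a)) := fun a => rfl
  have hmul := comm_mul hw hTz S (fun a => by simp only [hS]; exact hX a)
  set φ := repFun (betaSeq w) (S (Z w 0)) with hφ
  have hd : DifferentiableOn ℂ φ unitDisk := rep_diff hw _
  have hL : ∀ z ∈ unitDisk, ∀ a, ((ev w z).comp (X : H2 →L[ℂ] H2)) (Tz a)
      = φ z * ((ev w z).comp (X : H2 →L[ℂ] H2)) a := by
    intro z hz a
    have := hmul (X a) z hz
    rw [hS] at this
    simpa [ev_apply hw (mem_disk.1 hz)] using this
  have hle : ∀ z ∈ unitDisk, ‖φ z‖ ≤ 1 := by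
    intro z hz
    refine func_le hw hTz ((ev w z).comp (X : H2 →L[ℂ] H2)) (φ z) (hL z hz) ?_
    intro h0
    have := congrArg (fun L : H2 →L[ℂ] ℂ => L (X.symm (Z w 0))) h0
    simp [ev_apply hw (mem_disk.1 hz), rep_Z hw 0 (mem_disk.1 hz)] at this
  have hmaps : Set.MapsTo φ unitDisk unitDisk := by
    intro z hz
    rw [mem_disk]
    refine lt_of_le_of_ne (hle z hz) fun h1 => ?_
    have hc := Complex.eqOn_of_isPreconnected_of_isMaxOn_norm
      (convex_ball (0:ℂ) 1).isPreconnected Metric.isOpen_ball hd hz (by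
        intro y hy
        simp only [Set.mem_ofPred_eq, Function.comp, h1]
        exact hle y hy)
    have hTc : ∀ a, Tz a = φ z • a := by
      intro a
      have : S (X a) = φ z • X a := by
        refine rep_inj hw fun y hy => ?_
        have hy' := mem_disk.1 hy
        rw [hmul _ y hy, hc hy, ← ev_apply hw hy', ← ev_apply hw hy', map_smul]
        rfl
      rw [hS, X.symm_apply_apply, ← map_smul] at this
      exact X.injective this
    have key : ∀ y ∈ unitDisk, y = φ z := by
      intro y hy
      have hy' := mem_disk.1 hy
      have h := hTz (Z w 0) y hy
      rw [hTc, ← ev_apply hw hy', map_smul, ev_apply hw hy', rep_Z hw 0 hy'] at h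
      simpa using h.symm
    have k0 := key 0 (by simp [mem_disk])
    have k1 := key (1/2) (by rw [mem_disk]; norm_num)
    rw [← k0] at k1
    norm_num at k1
  refine ⟨φ, hd, hmaps, fun a z hz => ?_⟩
  have := func_eq hw hTz _ (φ z) (mem_disk.1 (hmaps hz)) (hL z hz) a
  simpa [ev_apply hw (mem_disk.1 hz)] using this

lemma one_sub_ne {z₀ z : ℂ} (h0 : ‖z₀‖ < 1) (hz : ‖z‖ < 1) : 1 - (starRingEnd ℂ) z₀ * z ≠ 0 := by
  intro h
  have h1 : (starRingEnd ℂ) z₀ * z = 1 := (sub_eq_zero.1 h).symm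
  have h2 := congrArg norm h1
  rw [norm_mul, RCLike.norm_conj, norm_one] at h2
  nlinarith [norm_nonneg z₀, norm_nonneg z]

lemma mobius_lt {z₀ z : ℂ} (h0 : ‖z₀‖ < 1) (hz : ‖z‖ < 1) : ‖mobius z₀ z‖ < 1 := by
  have hne := one_sub_ne h0 hz
  rw [mobius, norm_div, div_lt_one (norm_pos_iff.2 hne)]
  apply lt_of_pow_lt_pow_left₀ 2 (norm_nonneg _)
  have h0' : ‖z₀‖ ^ 2 < 1 := by nlinarith [norm_nonneg z₀]
  have hz' : ‖z‖ ^ 2 < 1 := by nlinarith [norm_nonneg z]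
  rw [← Complex.normSq_eq_norm_sq, Complex.normSq_apply] at *
  simp only [Complex.sub_re, Complex.sub_im, Complex.mul_re, Complex.mul_im, Complex.conj_re,
    Complex.conj_im, Complex.one_re, Complex.one_im, ← Complex.normSq_eq_norm_sq,
    Complex.normSq_apply] at *
  nlinarith

lemma mobius_invol {z₀ z : ℂ} (h0 : ‖z₀‖ < 1) (hz : ‖z‖ < 1) : mobius z₀ (mobius z₀ z) = z := by
  have hne := one_sub_ne h0 hz
  have hne2 := one_sub_ne h0 (mobius_lt h0 hz)
  have hne3 := one_sub_ne h0 h0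
  have hq : mobius z₀ z * (1 - (starRingEnd ℂ) z₀ * z) = z₀ - z := by
    rw [mobius, div_mul_cancel₀ _ hne]
  rw [mobius, div_eq_iff hne2]
  linear_combination -hq

lemma mobius_diff {z₀ : ℂ} (h0 : ‖z₀‖ < 1) : DifferentiableOn ℂ (mobius z₀) unitDisk := by
  unfold mobius
  refine DifferentiableOn.div (by fun_prop) (by fun_prop) fun z hz => ?_
  exact one_sub_ne h0 (mem_disk.1 hz)

lemma aut_of_inv {φ ψ : ℂ → ℂ} (hφ : DifferentiableOn ℂ φ unitDisk)
    (hψ : DifferentiableOn ℂ ψ unitDisk) (mφ : Set.MapsTo φ unitDisk unitDisk)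
    (mψ : Set.MapsTo ψ unitDisk unitDisk) (h1 : ∀ z ∈ unitDisk, φ (ψ z) = z)
    (h2 : ∀ z ∈ unitDisk, ψ (φ z) = z) :
    ∃ φ' : ℂ → ℂ, IsDiskAut φ' ∧ ∀ z ∈ unitDisk, φ z = φ' z := by
  have m0 : (0:ℂ) ∈ unitDisk := by simp [mem_disk]
  set z₀ := ψ 0 with hz₀
  have hz0 : z₀ ∈ unitDisk := mψ m0
  have hz0' := mem_disk.1 hz0
  have mm : Set.MapsTo (mobius z₀) unitDisk unitDisk := fun z hz =>
    mem_disk.2 (mobius_lt hz0' (mem_disk.1 hz))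
  let F := φ ∘ mobius z₀
  let G := mobius z₀ ∘ ψ
  have hF : DifferentiableOn ℂ F unitDisk := hφ.comp (mobius_diff hz0') mm
  have hG : DifferentiableOn ℂ G unitDisk := (mobius_diff hz0').comp hψ mψ
  have mF : Set.MapsTo F unitDisk unitDisk := mφ.comp mm
  have mG : Set.MapsTo G unitDisk unitDisk := mm.comp mψ
  have F0 : F 0 = 0 := by
    have : mobius z₀ 0 = z₀ := by simp [mobius]
    simp only [F, Function.comp, this]
    exact h1 0 m0
  have G0 : G 0 = 0 := by
    simp only [G, Function.comp, ← hz₀]; simp [mobius]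
  have hsub : unitDisk ⊆ Metric.closedBall 0 1 := Metric.ball_subset_closedBall
  have m2 : (1/2:ℂ) ∈ unitDisk := by rw [mem_disk]; norm_num
  have e1 : ‖F (1/2)‖ ≤ ‖(1/2:ℂ)‖ :=
    Complex.norm_le_norm_of_mapsTo_ball hF (mF.mono_right hsub) F0 (mem_disk.1 m2)
  have e2 : ‖G (F (1/2))‖ ≤ ‖F (1/2)‖ :=
    Complex.norm_le_norm_of_mapsTo_ball hG (mG.mono_right hsub) G0 (mem_disk.1 (mF m2))
  have e3 : G (F (1/2)) = 1/2 := by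
    simp only [F, G, Function.comp]
    rw [h2 _ (mm m2), mobius_invol hz0' (mem_disk.1 m2)]
  rw [e3] at e2
  have e4 := le_antisymm e1 e2
  obtain ⟨C, hC, hCF⟩ := Complex.affine_of_mapsTo_ball_of_exists_norm_dslope_eq_div'
    (f := F) (c := 0) (R₁ := 1) (R₂ := 1) hF (by rw [F0]; exact mF.mono_right hsub)
    ⟨1/2, m2, by
      rw [dslope_of_ne _ (by norm_num), slope_def_field, F0, sub_zero, sub_zero, norm_div, e4]
      norm_num⟩
  have hC1 : ‖C‖ = 1 := by simpa using hC
  obtain ⟨θ, hθ⟩ := (Complex.norm_eq_one_iff C).1 hC1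
  refine ⟨fun z => Complex.exp (θ * Complex.I) * mobius z₀ z, ⟨θ, z₀, hz0, fun z => rfl⟩, ?_⟩
  intro z hz
  have := hCF (mm hz)
  simp only [F, Function.comp, mobius_invol hz0' (mem_disk.1 hz)] at this
  have f0 : φ (mobius z₀ 0) = 0 := F0
  rw [this, f0, hθ, smul_eq_mul]
  ring

lemma forward {w : ℕ → ℝ} (hw : PolyGrowth w) {h₁ h₂ : ℂ → ℂ}
    {T₁ T₂ Tz : H2 →L[ℂ] H2}
    (hT₁ : RepMul (betaSeq w) h₁ T₁) (hT₂ : RepMul (betaSeq w) h₂ T₂)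
    (hTz : RepMul (betaSeq w) (fun z => z) Tz)
    (hc₁ : commutant T₁ = commutant Tz) (hc₂ : commutant T₂ = commutant Tz)
    (X : H2 ≃L[ℂ] H2) (hX : ∀ a : H2, X (T₁ a) = T₂ (X a)) :
      ∃ φ : ℂ → ℂ, IsDiskAut φ ∧ ∀ z ∈ unitDisk, h₂ z = h₁ (φ z) := by
  have hX' : ∀ a : H2, X.symm (T₂ a) = T₁ (X.symm a) := by
    intro a
    apply X.injective
    simp [hX]
  have hc : ∀ {T : H2 →L[ℂ] H2}, commutant T = commutant Tz → ∀ a, Tz (T a) = T (Tz a) := by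
    intro T hT a
    have h : Tz ∈ commutant T := by rw [hT]; rfl
    exact congrArg (fun S : H2 →L[ℂ] H2 => S a) (h : Tz * T = T * Tz)
  have hm : ∀ {T : H2 →L[ℂ] H2}, commutant T = commutant Tz → ∀ S : H2 →L[ℂ] H2,
      (∀ a, S (T a) = T (S a)) → ∀ a, S (Tz a) = Tz (S a) := by
    intro T hT S hS a
    have h : S ∈ commutant T := ContinuousLinearMap.ext hS
    rw [hT] at h
    exact congrArg (fun S : H2 →L[ℂ] H2 => S a) (h : S * Tz = Tz * S)
  obtain ⟨φ, hφ, mφ, eφ⟩ := weighted_comp hw hTz X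
    (hm hc₂ ((X : H2 →L[ℂ] H2).comp (Tz.comp (X.symm : H2 →L[ℂ] H2))) (fun a => by
      simp [hX', hc hc₁, hX]))
  obtain ⟨ψ, hψ, mψ, eψ⟩ := weighted_comp hw hTz X.symm
    (hm hc₁ ((X.symm : H2 →L[ℂ] H2).comp (Tz.comp (X : H2 →L[ℂ] H2))) (fun a => by
      simp [hX', hc hc₂, hX]))
  set u := repFun (betaSeq w) (X (Z w 0)) with hu
  set v := repFun (betaSeq w) (X.symm (Z w 0)) with hv
  have A1 : ∀ a, ∀ z ∈ unitDisk, repFun (betaSeq w) a z =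
      u z * (v (φ z) * repFun (betaSeq w) a (ψ (φ z))) := by
    intro a z hz
    have := eφ (X.symm a) z hz
    rwa [X.apply_symm_apply, eψ _ _ (mφ hz)] at this
  have A2 : ∀ a, ∀ z ∈ unitDisk, repFun (betaSeq w) a z =
      v z * (u (ψ z) * repFun (betaSeq w) a (φ (ψ z))) := by
    intro a z hz
    have := eψ (X a) z hz
    rwa [X.symm_apply_apply, eφ _ _ (mψ hz)] at this
  have B1 : ∀ z ∈ unitDisk, u z * v (φ z) = 1 := by
    intro z hz
    have := A1 (Z w 0) z hz
    rw [rep_Z hw 0 (mem_disk.1 hz), rep_Z hw 0 (mem_disk.1 (mψ (mφ hz)))] at this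
    simpa using this.symm
  have B2 : ∀ z ∈ unitDisk, v z * u (ψ z) = 1 := by
    intro z hz
    have := A2 (Z w 0) z hz
    rw [rep_Z hw 0 (mem_disk.1 hz), rep_Z hw 0 (mem_disk.1 (mφ (mψ hz)))] at this
    simpa using this.symm
  have C1 : ∀ z ∈ unitDisk, ψ (φ z) = z := by
    intro z hz
    have := A1 (Z w 1) z hz
    rw [rep_Z hw 1 (mem_disk.1 hz), rep_Z hw 1 (mem_disk.1 (mψ (mφ hz))), ← mul_assoc,
      B1 z hz] at this
    simpa using this.symm
  have C2 : ∀ z ∈ unitDisk, φ (ψ z) = z := by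
    intro z hz
    have := A2 (Z w 1) z hz
    rw [rep_Z hw 1 (mem_disk.1 hz), rep_Z hw 1 (mem_disk.1 (mφ (mψ hz))), ← mul_assoc,
      B2 z hz] at this
    simpa using this.symm
  obtain ⟨φ', hφ', he⟩ := aut_of_inv hφ hψ mφ mψ C2 C1
  refine ⟨φ', hφ', fun z hz => ?_⟩
  rw [← he z hz]
  have hz2 := mφ hz
  have h1 := eφ (T₁ (Z w 0)) z hz
  rw [hX, hT₂ _ z hz, hT₁ _ _ hz2, rep_Z hw 0 (mem_disk.1 hz2), ← hu] at h1
  have hu0 : u z ≠ 0 := left_ne_zero_of_mul_eq_one (B1 z hz)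
  have h2 : u z * h₂ z = u z * h₁ (φ z) := by
    rw [mul_comm, h1]; simp
  exact mul_left_cancel₀ hu0 h2


lemma weight_bound {w : ℕ → ℝ} (hw : PolyGrowth w) :
    ∃ C : ℝ, 0 ≤ C ∧ ∀ k : ℕ, |((k:ℝ) + 1) / w (k+1) - k * w (k+1)| ≤ C := by
  have hw1 : Tendsto (fun n : ℕ => w (n+1)) atTop (𝓝 1) := (tendsto_add_atTop_iff_nat 1).2 hw.2.1
  have hw2 : Tendsto (fun n : ℕ => (w (n+1))⁻¹) atTop (𝓝 (1⁻¹)) := hw1.inv₀ one_ne_zero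
  obtain ⟨W, hW⟩ := hw1.bddAbove_range
  obtain ⟨D, hD⟩ := hw2.bddAbove_range
  obtain ⟨M, hM⟩ := hw.2.2
  have hW' : ∀ k, w (k+1) ≤ W := fun k => hW ⟨k, rfl⟩
  have hD' : ∀ k, (w (k+1))⁻¹ ≤ D := fun k => hD ⟨k, rfl⟩
  have hp : ∀ k, 0 < w (k+1) := fun k => hw.1 _ (by omega)
  have hW0 : 0 < W := (hp 0).trans_le (hW' 0)
  have hD0 : 0 < D := (inv_pos.2 (hp 0)).trans_le (hD' 0)
  have hM0 : 0 ≤ M := le_trans (by positivity) (hM 1 le_rfl)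
  refine ⟨M * (1 + W) * D + W, by positivity, fun k => ?_⟩
  have hk := hM (k+1) (by omega)
  push_cast at hk
  have hk' : ((k:ℝ) + 1) * |w (k+1) - 1| ≤ M := by
    nlinarith [abs_nonneg (w (k+1) - 1)]
  have e : ((k:ℝ) + 1) / w (k+1) - k * w (k+1) =
      -(((k:ℝ) + 1) * (w (k+1) - 1) * (1 + w (k+1)) * (w (k+1))⁻¹) + w (k+1) := by
    have := (hp k).ne'
    field_simp
    ring
  rw [e]
  refine (abs_add_le _ _).trans ?_
  rw [abs_neg, abs_mul, abs_mul, abs_mul, abs_of_pos (hp k), abs_of_pos (inv_pos.2 (hp k)),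
    abs_of_nonneg (by positivity : (0:ℝ) ≤ k + 1), abs_of_pos (by linarith [hp k] : 0 < 1 + w (k+1))]
  have := hp k
  have := inv_pos.2 (hp k)
  gcongr
  · exact hW' k
  · exact hD' k
  · exact hW' k

lemma gronwall {E E' : ℝ → ℝ} {K ε : ℝ} (hK : 0 ≤ K) (hε : 0 ≤ ε)
    (hd : ∀ s ∈ Set.Icc (0:ℝ) 1, HasDerivAt E (E' s) s)
    (hb : ∀ s ∈ Set.Icc (0:ℝ) 1, E' s ≤ K * E s + ε) : E 1 ≤ Real.exp K * (E 0 + ε) := by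
  let F : ℝ → ℝ := fun s => Real.exp (-(K * s)) * E s - ε * s
  have hF : ∀ s ∈ Set.Icc (0:ℝ) 1, HasDerivAt F
      (Real.exp (-(K * s)) * (-(K * 1)) * E s + Real.exp (-(K * s)) * E' s - ε * 1) s := by
    intro s hs
    exact (((((hasDerivAt_id s).const_mul K).neg).exp).mul (hd s hs)).sub
      ((hasDerivAt_id s).const_mul ε)
  have hanti : AntitoneOn F (Set.Icc 0 1) := by
    refine antitoneOn_of_deriv_nonpos (convex_Icc 0 1)
      (fun s hs => (hF s hs).continuousAt.continuousWithinAt)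
      (fun s hs => ((hF s (interior_subset hs)).differentiableAt).differentiableWithinAt) ?_
    intro s hs
    have hs' := interior_subset hs
    rw [(hF s hs').deriv]
    have h1 := hb s hs'
    have h2 : Real.exp (-(K * s)) ≤ 1 := Real.exp_le_one_iff.2 (by nlinarith [hs'.1])
    have h3 := Real.exp_pos (-(K * s))
    have h4 : Real.exp (-(K * s)) * (E' s - K * E s) ≤ Real.exp (-(K * s)) * ε := by
      gcongr; linarith
    nlinarith
  have h := hanti (Set.left_mem_Icc.2 zero_le_one) (Set.right_mem_Icc.2 zero_le_one) zero_le_one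
  simp only [F, mul_one, mul_zero, neg_zero, Real.exp_zero, one_mul, sub_zero] at h
  have h5 : Real.exp K * Real.exp (-K) = 1 := by rw [← Real.exp_add]; simp
  have h6 := Real.exp_pos K
  calc E 1 = Real.exp K * (Real.exp (-K) * E 1) := by rw [← mul_assoc, h5, one_mul]
    _ ≤ _ := by gcongr; linarith

lemma abel_sum (b p : ℕ → ℝ) (N : ℕ) :
    ∑ k ∈ Finset.range (N+1), (k:ℝ) * b k * (p (k-1) - p k) =
      ∑ k ∈ Finset.range N, (((k:ℝ)+1) * b (k+1) - k * b k) * p k - N * b N * p N := by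
  induction N with
  | zero => simp
  | succ N ih =>
    rw [Finset.sum_range_succ, ih, Finset.sum_range_succ]
    simp only [Nat.add_sub_cancel]
    push_cast
    ring

lemma normsq_sum {w : ℕ → ℝ} (hw : PolyGrowth w) {ι : Type*} (s : Finset ι) (c μ : ι → ℂ)
    (hμ : ∀ i ∈ s, ‖μ i‖ < 1) :
    HasSum (fun k => ‖∑ i ∈ s, c i * μ i ^ k‖ ^ 2 / betaSeq w k ^ 2)
      (‖∑ i ∈ s, c i • V w (μ i)‖ ^ 2) := by
  have h := lp.hasSum_norm (p := 2) (by simp) (∑ i ∈ s, c i • V w (μ i))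
  simp only [ENNReal.toReal_ofNat, Real.rpow_two] at h
  convert! h using 2 with k
  have : (∑ i ∈ s, c i • V w (μ i) : H2) k = (∑ i ∈ s, c i * μ i ^ k) / (betaSeq w k : ℂ) := by
    rw [lp.coeFn_sum, Finset.sum_apply, Finset.sum_div]
    refine Finset.sum_congr rfl fun i hi => ?_
    rw [lp.coeFn_smul, Pi.smul_apply, V_apply hw (hμ i hi), smul_eq_mul, mul_div_assoc]
  rw [this, norm_div, Complex.norm_real, Real.norm_of_nonneg (beta_pos hw k).le, div_pow]

lemma flow_deriv {z₀ l : ℂ} (h0 : ‖z₀‖ < 1) (hl : ‖l‖ < 1) {s : ℝ} (hs : s ∈ Set.Icc (0:ℝ) 1) :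
    HasDerivAt (fun t : ℝ => mobius ((t:ℂ) * z₀) l)
      (((1 - s ^ 2 * ‖z₀‖ ^ 2)⁻¹ : ℝ) *
        (z₀ - (starRingEnd ℂ) z₀ * mobius ((s:ℂ) * z₀) l ^ 2)) s := by
  have hsz : ‖(s:ℂ) * z₀‖ < 1 := by
    rw [norm_mul, Complex.norm_real, Real.norm_of_nonneg hs.1]
    nlinarith [hs.2, norm_nonneg z₀]
  have hne := one_sub_ne hsz hl
  have hg : (1 - s ^ 2 * ‖z₀‖ ^ 2 : ℝ) ≠ 0 := by
    rw [norm_mul, Complex.norm_real, Real.norm_of_nonneg hs.1] at hsz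
    have : 0 ≤ s * ‖z₀‖ := mul_nonneg hs.1 (norm_nonneg _)
    nlinarith
  have hg' : (1 - (s:ℂ) ^ 2 * (z₀ * (starRingEnd ℂ) z₀)) ≠ 0 := by
    rw [Complex.mul_conj, Complex.normSq_eq_norm_sq]
    exact_mod_cast hg
  have hid : HasDerivAt (fun t : ℝ => (t:ℂ)) 1 s := Complex.ofRealCLM.hasDerivAt
  unfold mobius at *
  simp only [map_mul, Complex.conj_ofReal] at *
  have hd := ((hid.mul_const z₀).sub_const l).div
    ((((hid.mul_const ((starRingEnd ℂ) z₀)).mul_const l).const_sub 1)) hne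
  convert! hd using 1
  have e : (((1 - s ^ 2 * ‖z₀‖ ^ 2)⁻¹ : ℝ) : ℂ) =
      (1 - (s:ℂ) ^ 2 * (z₀ * (starRingEnd ℂ) z₀))⁻¹ := by
    rw [Complex.mul_conj, Complex.normSq_eq_norm_sq]
    push_cast
    rfl
  rw [e]
  generalize (starRingEnd ℂ) z₀ = q at *
  rw [inv_mul_eq_iff_eq_mul₀ hg', div_pow, eq_comm, ← mul_div_assoc, div_eq_iff (pow_ne_zero 2 hne)]
  have hq := div_mul_cancel₀ (((s:ℂ) * z₀ - l) ^ 2) (pow_ne_zero 2 hne)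
  linear_combination q * hq

lemma flow_bound {z₀ : ℂ} (h0 : ‖z₀‖ < 1) (s : Finset ℂ) (hs : ∀ l ∈ s, ‖l‖ < 1) :
    ∃ ρ : ℝ, 0 < ρ ∧ ρ < 1 ∧ ∀ l ∈ s, ∀ t ∈ Set.Icc (0:ℝ) 1, ‖mobius ((t:ℂ) * z₀) l‖ ≤ ρ := by
  classical
  induction s using Finset.induction_on with
  | empty => exact ⟨1/2, by norm_num, by norm_num, by simp⟩
  | insert l s hls ih =>
    obtain ⟨ρ, h1, h2, h3⟩ := ih fun l hl => hs l (Finset.mem_insert_of_mem hl)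
    have hl := hs l (Finset.mem_insert_self _ _)
    have hc : ContinuousOn (fun t : ℝ => ‖mobius ((t:ℂ) * z₀) l‖) (Set.Icc 0 1) := fun t ht =>
      ((flow_deriv h0 hl ht).continuousAt.norm).continuousWithinAt
    obtain ⟨t0, ht0, hmax⟩ := isCompact_Icc.exists_isMaxOn (Set.nonempty_Icc.2 zero_le_one) hc
    have hlt : ‖mobius ((t0:ℂ) * z₀) l‖ < 1 := by
      refine mobius_lt ?_ hl
      rw [norm_mul, Complex.norm_real, Real.norm_of_nonneg ht0.1]
      nlinarith [ht0.2, norm_nonneg z₀]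
    refine ⟨max ρ ‖mobius ((t0:ℂ) * z₀) l‖, lt_max_of_lt_left h1, max_lt h2 hlt, ?_⟩
    intro l' hl' t ht
    rcases Finset.mem_insert.1 hl' with rfl | hl'
    · exact le_max_of_le_right (hmax ht)
    · exact le_max_of_le_left (h3 l' hl' t ht)


lemma energy_deriv {z₀ : ℂ} (h0 : ‖z₀‖ < 1) (s : Finset ℂ) (hs : ∀ l ∈ s, ‖l‖ < 1) (c : ℂ → ℂ)
    {t : ℝ} (ht : t ∈ Set.Icc (0:ℝ) 1) (k : ℕ) (y : ℕ → ℝ → ℂ)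
    (hy : y = fun (k : ℕ) (t : ℝ) => ∑ l ∈ s, c l * mobius ((t:ℂ) * z₀) l ^ k) :
    HasDerivAt (fun t => ‖y k t‖ ^ 2)
      ((1 - t ^ 2 * ‖z₀‖ ^ 2)⁻¹ * (k * (2 * (z₀ * y (k-1) t * (starRingEnd ℂ) (y k t)).re
        - 2 * (z₀ * y k t * (starRingEnd ℂ) (y (k+1) t)).re))) t := by
  have h1 : HasDerivAt (y k) (((1 - t ^ 2 * ‖z₀‖ ^ 2)⁻¹ : ℝ) *
      (k * (z₀ * y (k-1) t - (starRingEnd ℂ) z₀ * y (k+1) t))) t := by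
    have h2 : HasDerivAt (fun t : ℝ => ∑ l ∈ s, c l * mobius ((t:ℂ) * z₀) l ^ k) _ t :=
      HasDerivAt.fun_sum fun l hl => ((flow_deriv h0 (hs l hl) ht).pow k).const_mul (c l)
    subst hy
    convert! h2 using 1
    rcases k with _ | k
    · simp
    · simp only [Nat.add_sub_cancel, Finset.mul_sum, ← Finset.sum_sub_distrib]
      refine Finset.sum_congr rfl fun l hl => ?_
      ring
  have h3 := h1.norm_sq
  convert! h3 using 1
  rw [Complex.inner]
  set g := (1 - t ^ 2 * ‖z₀‖ ^ 2)⁻¹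
  simp only [Complex.mul_re, Complex.mul_im, Complex.sub_re, Complex.sub_im, Complex.conj_re,
    Complex.conj_im, Complex.ofReal_re, Complex.ofReal_im, Complex.natCast_re, Complex.natCast_im]
  ring

lemma quad_bound {w : ℕ → ℝ} (hw : PolyGrowth w) {C : ℝ} (hC0 : 0 ≤ C)
    (hC : ∀ k : ℕ, |((k:ℝ) + 1) / w (k+1) - k * w (k+1)| ≤ C) (z₀ : ℂ) (h0 : ‖z₀‖ < 1)
    (y : ℕ → ℂ) (N : ℕ) :
    ∑ k ∈ Finset.range (N+1), (k:ℝ) * (2 * (z₀ * y (k-1) * (starRingEnd ℂ) (y k)).re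
        - 2 * (z₀ * y k * (starRingEnd ℂ) (y (k+1))).re) / betaSeq w k ^ 2 ≤
      2 * C * ∑ k ∈ Finset.range (N+1), ‖y k‖ ^ 2 / betaSeq w k ^ 2
        + 2 * N * (‖y N‖ * ‖y (N+1)‖) / betaSeq w N ^ 2 := by
  let p : ℕ → ℝ := fun k => 2 * (z₀ * y k * (starRingEnd ℂ) (y (k+1))).re
  let b : ℕ → ℝ := fun k => 1 / betaSeq w k ^ 2
  have hp : ∀ k, |p k| ≤ 2 * (‖y k‖ * ‖y (k+1)‖) := by
    intro k
    simp only [p, abs_mul, abs_two]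
    have := Complex.abs_re_le_norm (z₀ * y k * (starRingEnd ℂ) (y (k+1)))
    rw [norm_mul, norm_mul, RCLike.norm_conj] at this
    have h2 : ‖z₀‖ * ‖y k‖ * ‖y (k+1)‖ ≤ ‖y k‖ * ‖y (k+1)‖ := by
      rw [mul_assoc]
      exact mul_le_of_le_one_left (by positivity) h0.le
    linarith
  have e1 : ∑ k ∈ Finset.range (N+1), (k:ℝ) * (2 * (z₀ * y (k-1) * (starRingEnd ℂ) (y k)).re
        - 2 * (z₀ * y k * (starRingEnd ℂ) (y (k+1))).re) / betaSeq w k ^ 2 =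
      ∑ k ∈ Finset.range (N+1), (k:ℝ) * b k * (p (k-1) - p k) := by
    refine Finset.sum_congr rfl fun k _ => ?_
    rcases k with _ | k
    · simp
    · simp only [p, b, Nat.add_sub_cancel]
      ring
  rw [e1, abel_sum]
  have e2 : ∑ k ∈ Finset.range N, (((k:ℝ)+1) * b (k+1) - k * b k) * p k ≤
      2 * C * ∑ k ∈ Finset.range (N+1), ‖y k‖ ^ 2 / betaSeq w k ^ 2 := by
    have e3 : ∀ k : ℕ, (((k:ℝ)+1) * b (k+1) - k * b k) * p k ≤
        C * (‖y k‖ ^ 2 / betaSeq w k ^ 2) + C * (‖y (k+1)‖ ^ 2 / betaSeq w (k+1) ^ 2) := by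
      intro k
      have b0 := beta_pos hw k
      have b1 := beta_pos hw (k+1)
      have hwp := hw.1 (k+1) (by omega)
      have e4 : (((k:ℝ)+1) * b (k+1) - k * b k) =
          (((k:ℝ) + 1) / w (k+1) - k * w (k+1)) / (betaSeq w k * betaSeq w (k+1)) := by
        simp only [b, beta_succ]
        field_simp
      have e5 : (((k:ℝ)+1) * b (k+1) - k * b k) * p k ≤
          (C / (betaSeq w k * betaSeq w (k+1))) * (2 * (‖y k‖ * ‖y (k+1)‖)) := by
        refine (le_abs_self _).trans ?_
        rw [abs_mul, e4, abs_div, abs_of_pos (mul_pos b0 b1)]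
        exact mul_le_mul (by gcongr; exact hC k) (hp k) (abs_nonneg _) (by positivity)
      have e6 : (C / (betaSeq w k * betaSeq w (k+1))) * (2 * (‖y k‖ * ‖y (k+1)‖)) =
          C * (2 * (‖y k‖ / betaSeq w k) * (‖y (k+1)‖ / betaSeq w (k+1))) := by
        field_simp
      rw [e6] at e5
      refine e5.trans ?_
      rw [← mul_add, ← div_pow, ← div_pow]
      exact mul_le_mul_of_nonneg_left (two_mul_le_add_sq _ _) hC0
    refine (Finset.sum_le_sum fun k _ => e3 k).trans ?_
    rw [Finset.sum_add_distrib, ← Finset.mul_sum, ← Finset.mul_sum]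
    have f1 : ∑ k ∈ Finset.range N, ‖y k‖ ^ 2 / betaSeq w k ^ 2 ≤
        ∑ k ∈ Finset.range (N+1), ‖y k‖ ^ 2 / betaSeq w k ^ 2 := by
      rw [Finset.sum_range_succ]
      have : 0 ≤ ‖y N‖ ^ 2 / betaSeq w N ^ 2 := by positivity
      linarith
    have f2 : ∑ k ∈ Finset.range N, ‖y (k+1)‖ ^ 2 / betaSeq w (k+1) ^ 2 ≤
        ∑ k ∈ Finset.range (N+1), ‖y k‖ ^ 2 / betaSeq w k ^ 2 := by
      rw [Finset.sum_range_succ']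
      have : 0 ≤ ‖y 0‖ ^ 2 / betaSeq w 0 ^ 2 := by positivity
      linarith
    nlinarith
  have e7 : -(N * b N * p N) ≤ 2 * N * (‖y N‖ * ‖y (N+1)‖) / betaSeq w N ^ 2 := by
    have b0 := beta_pos hw N
    have : -p N ≤ 2 * (‖y N‖ * ‖y (N+1)‖) := (neg_le_abs _).trans (hp N)
    calc -(N * b N * p N) = N * b N * (-p N) := by ring
      _ ≤ N * b N * (2 * (‖y N‖ * ‖y (N+1)‖)) := by gcongr
      _ = _ := by simp only [b]; ring
  linarith

lemma energy {w : ℕ → ℝ} (hw : PolyGrowth w) {z₀ : ℂ} (h0 : ‖z₀‖ < 1) :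
    ∃ K : ℝ, 0 ≤ K ∧ ∀ (s : Finset ℂ) (c : ℂ → ℂ), (∀ l ∈ s, ‖l‖ < 1) →
      ‖∑ l ∈ s, c l • V w (mobius z₀ l)‖ ^ 2 ≤ K * ‖∑ l ∈ s, c l • V w l‖ ^ 2 := by
  obtain ⟨C, hC0, hC⟩ := weight_bound hw
  have hz1 : 0 < 1 - ‖z₀‖ ^ 2 := by nlinarith [norm_nonneg z₀]
  set G := (1 - ‖z₀‖ ^ 2)⁻¹ with hG
  have hG0 : 0 < G := inv_pos.2 hz1
  refine ⟨Real.exp (G * (2 * C)), (Real.exp_pos _).le, fun s c hs => ?_⟩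
  obtain ⟨ρ, hρ0, hρ1, hρ⟩ := flow_bound h0 s hs
  let y : ℕ → ℝ → ℂ := fun k t => ∑ l ∈ s, c l * mobius ((t:ℂ) * z₀) l ^ k
  set A := ∑ l ∈ s, ‖c l‖ with hA
  have hA0 : 0 ≤ A := Finset.sum_nonneg fun l _ => norm_nonneg _
  have hyb : ∀ k, ∀ t ∈ Set.Icc (0:ℝ) 1, ‖y k t‖ ≤ A * ρ ^ k := by
    intro k t ht
    refine (norm_sum_le _ _).trans ?_
    rw [hA, Finset.sum_mul]
    refine Finset.sum_le_sum fun l hl => ?_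
    rw [norm_mul, norm_pow]
    gcongr
    exact hρ l hl t ht
  let ε : ℕ → ℝ := fun N => G * (2 * A ^ 2 * ((N + 1) * (ρ ^ N / betaSeq w N) ^ 2))
  have hε0 : ∀ N, 0 ≤ ε N := fun N => by simp only [ε]; positivity
  have hε : Tendsto ε atTop (𝓝 0) := by
    have := (((summable_sq hw hρ0 hρ1).tendsto_atTop_zero).const_mul (2 * A ^ 2)).const_mul G
    simpa using this
  have hE : ∀ N : ℕ, ∑ k ∈ Finset.range (N+1), ‖y k 1‖ ^ 2 / betaSeq w k ^ 2 ≤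
      Real.exp (G * (2 * C)) *
        (∑ k ∈ Finset.range (N+1), ‖y k 0‖ ^ 2 / betaSeq w k ^ 2 + ε N) := by
    intro N
    refine gronwall (E := fun t => ∑ k ∈ Finset.range (N+1), ‖y k t‖ ^ 2 / betaSeq w k ^ 2)
      (E' := fun t => ∑ k ∈ Finset.range (N+1), ((1 - t ^ 2 * ‖z₀‖ ^ 2)⁻¹ *
        (k * (2 * (z₀ * y (k-1) t * (starRingEnd ℂ) (y k t)).re
        - 2 * (z₀ * y k t * (starRingEnd ℂ) (y (k+1) t)).re))) / betaSeq w k ^ 2)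
      (by positivity) (hε0 N) ?_ ?_
    · intro t ht
      exact HasDerivAt.fun_sum fun k _ => (energy_deriv h0 s hs c ht k y rfl).div_const _
    · intro t ht
      have ht2 : t ^ 2 ≤ 1 := by nlinarith [ht.1, ht.2]
      have hg1 : 1 - ‖z₀‖ ^ 2 ≤ 1 - t ^ 2 * ‖z₀‖ ^ 2 := by nlinarith [sq_nonneg ‖z₀‖]
      have hgG : (1 - t ^ 2 * ‖z₀‖ ^ 2)⁻¹ ≤ G := inv_anti₀ hz1 hg1
      have hg0 : 0 < (1 - t ^ 2 * ‖z₀‖ ^ 2)⁻¹ := inv_pos.2 (hz1.trans_le hg1)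
      have hq := quad_bound hw hC0 hC z₀ h0 (fun k => y k t) N
      have hb := beta_pos hw N
      have hbd : 2 * N * (‖y N t‖ * ‖y (N+1) t‖) / betaSeq w N ^ 2 ≤
          2 * A ^ 2 * ((N + 1) * (ρ ^ N / betaSeq w N) ^ 2) := by
        have y1 := hyb N t ht
        have y2 : ‖y (N+1) t‖ ≤ A * ρ ^ N := (hyb (N+1) t ht).trans (by
          gcongr ?_ * ?_
          exact pow_le_pow_of_le_one hρ0.le hρ1.le (Nat.le_succ N))
        calc 2 * N * (‖y N t‖ * ‖y (N+1) t‖) / betaSeq w N ^ 2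
            ≤ 2 * (N + 1) * ((A * ρ ^ N) * (A * ρ ^ N)) / betaSeq w N ^ 2 := by
              gcongr
              linarith
          _ = _ := by field_simp
      have hS : 0 ≤ ∑ k ∈ Finset.range (N+1), ‖y k t‖ ^ 2 / betaSeq w k ^ 2 :=
        Finset.sum_nonneg fun k _ => by positivity
      simp only [mul_div_assoc, ← Finset.mul_sum] at hq ⊢
      simp only [mul_div_assoc] at hbd
      have hR : 0 ≤ 2 * A ^ 2 * ((N + 1) * (ρ ^ N / betaSeq w N) ^ 2) := by positivity
      have hfin := (mul_le_mul_of_nonneg_left (hq.trans (add_le_add_right hbd _)) hg0.le).trans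
        (mul_le_mul_of_nonneg_right hgG (by positivity))
      refine hfin.trans (le_of_eq ?_)
      simp only [ε]
      ring
  have h1 : HasSum (fun k => ‖y k 1‖ ^ 2 / betaSeq w k ^ 2)
      (‖∑ l ∈ s, c l • V w (mobius z₀ l)‖ ^ 2) := by
    have := normsq_sum hw s c (fun l => mobius z₀ l) (fun l hl => mobius_lt h0 (hs l hl))
    simpa [y] using this
  have h2 : HasSum (fun k => ‖y k 0‖ ^ 2 / betaSeq w k ^ 2) (‖∑ l ∈ s, c l • V w l‖ ^ 2) := by
    have := normsq_sum hw s c (fun l => l) hs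
    convert! this using 2 with k
    have : y k 0 = (-1) ^ k * ∑ l ∈ s, c l * l ^ k := by
      simp only [y, Finset.mul_sum]
      refine Finset.sum_congr rfl fun l _ => ?_
      simp only [mobius, Complex.ofReal_zero, zero_mul, map_zero, zero_sub, sub_zero, div_one]
      rw [neg_pow]
      ring
    rw [this]
    simp
  have t1 := h1.tendsto_sum_nat.comp (tendsto_add_atTop_nat 1)
  have t2 := h2.tendsto_sum_nat.comp (tendsto_add_atTop_nat 1)
  have t3 := (t2.add hε).const_mul (Real.exp (G * (2 * C)))
  rw [add_zero] at t3
  exact le_of_tendsto_of_tendsto' t1 t3 hE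

lemma V_dense {w : ℕ → ℝ} (hw : PolyGrowth w) {a : H2}
    (h : ∀ l ∈ unitDisk, inner ℂ (V w l) a = 0) : a = 0 := by
  refine rep_inj hw fun z hz => ?_
  have hz' := mem_disk.1 hz
  rw [rep_eq hw hz', rep_eq hw hz', h _ (mem_disk.2 (by simpa using hz')), inner_zero_right]

/-- generic boundedness of the composition operator -/
lemma comp_bdd {w : ℕ → ℝ} (hw : PolyGrowth w) {ψ : ℂ → ℂ}
    (hm : Set.MapsTo ψ unitDisk unitDisk) {K : ℝ}
    (hK : ∀ (s : Finset ℂ) (c : ℂ → ℂ), (∀ l ∈ s, ‖l‖ < 1) →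
      ‖∑ l ∈ s, c l • V w ((starRingEnd ℂ) (ψ ((starRingEnd ℂ) l)))‖ ≤
        K * ‖∑ l ∈ s, c l • V w l‖) :
    ∃ T : H2 →L[ℂ] H2, RepComp (betaSeq w) ψ T := by
  let ι := {l : ℂ // ‖l‖ < 1}
  let e : (ι →₀ ℂ) →ₗ[ℂ] H2 := Finsupp.linearCombination ℂ (fun l : ι => V w l)
  let f : (ι →₀ ℂ) →ₗ[ℂ] H2 :=
    Finsupp.linearCombination ℂ (fun l : ι => V w ((starRingEnd ℂ) (ψ ((starRingEnd ℂ) (l:ℂ)))))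
  have hd : DenseRange e := by
    have h1 : (LinearMap.range e).topologicalClosure = ⊤ := by
      rw [Submodule.topologicalClosure_eq_top_iff, Submodule.eq_bot_iff]
      intro a ha
      refine V_dense hw fun l hl => ?_
      refine (Submodule.mem_orthogonal _ _).1 ha _ ⟨Finsupp.single ⟨l, mem_disk.1 hl⟩ 1, ?_⟩
      simp [e]
    have := (Submodule.dense_iff_topologicalClosure_eq_top).2 h1
    exact this
  have hb : ∀ x, ‖f x‖ ≤ K * ‖e x‖ := by
    intro x
    have hx := hK (x.support.map ⟨Subtype.val, Subtype.val_injective⟩)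
      (fun l => if h : ‖l‖ < 1 then x ⟨l, h⟩ else 0) (by
        intro l hl
        obtain ⟨y, _, rfl⟩ := Finset.mem_map.1 hl
        exact y.2)
    have hdite : ∀ i : ι, (if h : ‖(i:ℂ)‖ < 1 then x ⟨i, h⟩ else 0) = x i := fun i => dif_pos i.2
    simp only [Finset.sum_map, Function.Embedding.coeFn_mk, hdite] at hx
    simpa only [e, f, Finsupp.linearCombination_apply, Finsupp.sum] using hx
  let D : H2 →L[ℂ] H2 := f.extendOfNorm e
  have hD : ∀ l, ‖l‖ < 1 → D (V w l) = V w ((starRingEnd ℂ) (ψ ((starRingEnd ℂ) l))) := by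
    intro l hl
    have := LinearMap.extendOfNorm_eq (f := f) (e := e) hd ⟨K, hb⟩ (Finsupp.single ⟨l, hl⟩ 1)
    simpa [e, f, D] using this
  refine ⟨ContinuousLinearMap.adjoint D, fun a z hz => ?_⟩
  have hz' := mem_disk.1 hz
  rw [rep_eq hw hz', rep_eq hw (mem_disk.1 (hm hz)), ContinuousLinearMap.adjoint_inner_right,
    hD _ (by simpa using hz'), Complex.conj_conj]

lemma aut_maps {φ : ℂ → ℂ} (hφ : IsDiskAut φ) : Set.MapsTo φ unitDisk unitDisk := by
  obtain ⟨θ, z₀, hz₀, h⟩ := hφ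
  intro z hz
  rw [mem_disk, h, norm_mul, Complex.norm_exp_ofReal_mul_I, one_mul]
  exact mobius_lt (mem_disk.1 hz₀) (mem_disk.1 hz)

lemma aut_comp {w : ℕ → ℝ} (hw : PolyGrowth w) {φ : ℂ → ℂ} (hφ : IsDiskAut φ) :
    ∃ T : H2 →L[ℂ] H2, RepComp (betaSeq w) φ T := by
  have hm := aut_maps hφ
  obtain ⟨θ, z₀, hz₀, h⟩ := hφ
  have hz₀' : ‖(starRingEnd ℂ) z₀‖ < 1 := by simpa using mem_disk.1 hz₀
  obtain ⟨K, hK0, hK⟩ := energy hw hz₀'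
  refine comp_bdd hw hm (K := Real.sqrt K) fun s c hs => ?_
  have hs2 : 0 ≤ ‖∑ l ∈ s, c l • V w l‖ := norm_nonneg _
  refine le_of_sq_le_sq ?_ (by positivity)
  rw [mul_pow, Real.sq_sqrt hK0]
  refine le_trans (le_of_eq ?_) (hK s c hs)
  set q := (starRingEnd ℂ) (Complex.exp (θ * Complex.I)) with hq
  have hq1 : ‖q‖ = 1 := by rw [hq, RCLike.norm_conj, Complex.norm_exp_ofReal_mul_I]
  have he : ∀ l, (starRingEnd ℂ) (φ ((starRingEnd ℂ) l)) = q * mobius ((starRingEnd ℂ) z₀) l := by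
    intro l
    rw [h]
    simp [mobius, hq]
  simp only [he]
  have h1 := normsq_sum hw s c (fun l => q * mobius ((starRingEnd ℂ) z₀) l) (fun l hl => by
    rw [norm_mul, hq1, one_mul]; exact mobius_lt hz₀' (hs l hl))
  have h2 := normsq_sum hw s c (fun l => mobius ((starRingEnd ℂ) z₀) l) (fun l hl =>
    mobius_lt hz₀' (hs l hl))
  refine h1.unique ?_
  convert! h2 using 2 with k
  have : ∑ i ∈ s, c i * (q * mobius ((starRingEnd ℂ) z₀) i) ^ k =
      q ^ k * ∑ i ∈ s, c i * mobius ((starRingEnd ℂ) z₀) i ^ k := by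
    rw [Finset.mul_sum]
    refine Finset.sum_congr rfl fun l _ => ?_
    rw [mul_pow]; ring
  rw [this, norm_mul, norm_pow, hq1, one_pow, one_mul]

lemma aut_inv {φ : ℂ → ℂ} (hφ : IsDiskAut φ) :
    ∃ ψ : ℂ → ℂ, IsDiskAut ψ ∧ (∀ z ∈ unitDisk, φ (ψ z) = z) ∧ (∀ z ∈ unitDisk, ψ (φ z) = z) := by
  obtain ⟨θ, z₀, hz₀, h⟩ := hφ
  have hz₀' := mem_disk.1 hz₀
  set q := Complex.exp (θ * Complex.I) with hq
  have hq1 : ‖q‖ = 1 := Complex.norm_exp_ofReal_mul_I θ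
  have hqc : (starRingEnd ℂ) q * q = 1 := by
    rw [mul_comm, Complex.mul_conj, Complex.normSq_eq_norm_sq, hq1]; simp
  have hqe : Complex.exp ((-θ : ℝ) * Complex.I) = (starRingEnd ℂ) q := by
    rw [hq, ← Complex.exp_conj]; simp
  have hψ : ∀ z, Complex.exp ((-θ : ℝ) * Complex.I) * mobius (q * z₀) z =
      mobius z₀ ((starRingEnd ℂ) q * z) := by
    intro z
    rw [hqe, mobius, mobius, map_mul, ← mul_div_assoc]
    congr 1
    · linear_combination z₀ * hqc
    · ring
  refine ⟨fun z => mobius z₀ ((starRingEnd ℂ) q * z), ⟨-θ, q * z₀, ?_, fun z => (hψ z).symm⟩, ?_, ?_⟩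
  · rw [mem_disk, norm_mul, hq1, one_mul]; exact hz₀'
  · intro z hz
    rw [h, mobius_invol hz₀' (by rw [norm_mul, RCLike.norm_conj, hq1, one_mul]; exact mem_disk.1 hz)]
    linear_combination z * hqc
  · intro z hz
    simp only [h]
    rw [← mul_assoc, hqc, one_mul, mobius_invol hz₀' (mem_disk.1 hz)]

lemma backward {w : ℕ → ℝ} (hw : PolyGrowth w) {h₁ h₂ : ℂ → ℂ}
    {T₁ T₂ : H2 →L[ℂ] H2}
    (hT₁ : RepMul (betaSeq w) h₁ T₁) (hT₂ : RepMul (betaSeq w) h₂ T₂)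
    {φ : ℂ → ℂ} (hφ : IsDiskAut φ) (he : ∀ z ∈ unitDisk, h₂ z = h₁ (φ z)) :
    ∃ X : H2 ≃L[ℂ] H2, ∀ a : H2, X (T₁ a) = T₂ (X a) := by
  obtain ⟨ψ, hψ, e1, e2⟩ := aut_inv hφ
  obtain ⟨A, hA⟩ := aut_comp hw hφ
  obtain ⟨B, hB⟩ := aut_comp hw hψ
  have mφ := aut_maps hφ
  have mψ := aut_maps hψ
  refine ⟨ContinuousLinearEquiv.equivOfInverse A B ?_ ?_, ?_⟩
  · intro a
    refine rep_inj hw fun z hz => ?_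
    rw [hB _ z hz, hA _ _ (mψ hz), e1 z hz]
  · intro a
    refine rep_inj hw fun z hz => ?_
    rw [hA _ z hz, hB _ _ (mφ hz), e2 z hz]
  · intro a
    simp only [ContinuousLinearEquiv.equivOfInverse_apply]
    refine rep_inj hw fun z hz => ?_
    rw [hA _ z hz, hT₁ _ _ (mφ hz), hT₂ _ z hz, hA _ z hz, he z hz]

end S17

/-- Let `H²_β` be of polynomial growth and let `h₁, h₂` be analytic
on a neighbourhood of the closed disk with `{M_{h₁}}' = {M_{h₂}}' = {M_z}'`.  Then
`M_{h₁} ∼ M_{h₂}` on `H²_β` iff there is `φ ∈ Aut(𝔻)` with `h₂ = h₁ ∘ φ`. -/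
theorem statement17 (w : ℕ → ℝ) (hw : PolyGrowth w) (h₁ h₂ : ℂ → ℂ)
    (hh₁ : AnalyticOnClosedDisk h₁) (hh₂ : AnalyticOnClosedDisk h₂)
    (T₁ T₂ Tz : H2 →L[ℂ] H2)
    (hT₁ : RepMul (betaSeq w) h₁ T₁) (hT₂ : RepMul (betaSeq w) h₂ T₂)
    (hTz : RepMul (betaSeq w) (fun z => z) Tz)
    (hc₁ : commutant T₁ = commutant Tz) (hc₂ : commutant T₂ = commutant Tz) :
    (∃ X : H2 ≃L[ℂ] H2, ∀ a : H2, X (T₁ a) = T₂ (X a)) ↔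
      ∃ φ : ℂ → ℂ, IsDiskAut φ ∧ ∀ z ∈ unitDisk, h₂ z = h₁ (φ z) := by

  constructor
  · rintro ⟨X, hX⟩
    exact S17.forward hw hT₁ hT₂ hTz hc₁ hc₂ X hX
  · rintro ⟨φ, hφ, he⟩
    exact S17.backward hw hT₁ hT₂ hφ he
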